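/- For all ε > 0 and Δ > 0, the infimum of V(μ) = ∫_{ℝ²} ‖x‖₁ dμ(x) over all probability measures μ on ℝ² satisfying the ε-differential-privacy constraint equals the infimum over γ ∈ [0,1] of ∫_{ℝ²} ‖x‖₁ f_γ(x) dx, where f_γ is the two-dimensional staircase density with parameter γ. (Theorem 1, optimality of the staircase mechanism for d = 2 and the ℓ¹ cost.) -/

import Mathlib

open MeasureTheory Real Filter
open scoped ENNReal Topology

noncomputable section

/-- The ℓ¹ norm on ℝ². -/
def l1 (x : ℝ × ℝ) : ℝ := |x.1| + |x.2|

/-- The ε-differential-privacy constraint on a measure on ℝ² with sensitivity Δ. -/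
def DPC (ε Δ : ℝ) (μ : Measure (ℝ × ℝ)) : Prop :=
  ∀ S : Set (ℝ × ℝ), MeasurableSet S → ∀ t : ℝ × ℝ, l1 t ≤ Δ →
    μ S ≤ ENNReal.ofReal (Real.exp ε) * μ ((· + t) '' S)

/-- Expected ℓ¹ cost of a noise distribution. -/
def cost (μ : Measure (ℝ × ℝ)) : ℝ≥0∞ := ∫⁻ x, ENNReal.ofReal (l1 x) ∂μ

/-- Normalization constant of the 2-dimensional staircase density. -/
def anorm (ε Δ γ : ℝ) : ℝ :=
  1 / (2 * Δ ^ 2 * (γ ^ 2 + 2 * Real.exp (-ε) / (1 - Real.exp (-ε)) * γ +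
    (Real.exp (-ε) + Real.exp (-ε) ^ 2) / (1 - Real.exp (-ε)) ^ 2))

/-- The 2-dimensional staircase density with parameter γ; for ‖x‖₁ ∈ [kΔ, (k+γ)Δ) it
equals a(γ)·e^{-kε}, and for ‖x‖₁ ∈ [(k+γ)Δ, (k+1)Δ) it equals a(γ)·e^{-(k+1)ε}. -/
def stair (ε Δ γ : ℝ) (x : ℝ × ℝ) : ℝ :=
  if l1 x < ((⌊l1 x / Δ⌋ : ℝ) + γ) * Δ then
    anorm ε Δ γ * Real.exp (-(⌊l1 x / Δ⌋ : ℝ) * ε)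
  else
    anorm ε Δ γ * Real.exp (-((⌊l1 x / Δ⌋ : ℝ) + 1) * ε)

def M1 (b g : ℝ) : ℝ := (1/(1-b))*g^2/2 + b/(1-b)^2*g + b*((1/(1-b))*(1-g^2)/2 + b/(1-b)^2*(1-g))
def N1 (b g : ℝ) : ℝ := (1/(1-b))*g^3/3 + b/(1-b)^2*g^2 + b*(1+b)/(1-b)^3*g +
  b*((1/(1-b))*(1-g^3)/3 + b/(1-b)^2*(1-g^2) + b*(1+b)/(1-b)^3*(1-g))

lemma M1_pos {b g : ℝ} (hb : 0 < b) (hb1 : b < 1) (hg : 0 ≤ g) : 0 < M1 b g := by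
  have h : M1 b g = (g^2 + 2*b/(1-b)*g + (b+b^2)/(1-b)^2)/2 := by
    have : 1 - b ≠ 0 := by linarith
    unfold M1; field_simp; ring
  rw [h]
  have : 0 < 1 - b := by linarith
  positivity

lemma first_order {c d e H : ℝ} (hH : 0 < H)
    (h : ∀ x, 0 ≤ x → x ≤ H → 0 ≤ c * x + x^2 * (e * x + d)) : 0 ≤ c := by
  by_contra hc
  push Not at hc
  set K := 1 + |e| + |d| with hK
  have hKp : 0 < K := by positivity
  obtain ⟨x, hx0, hxH, hx1, hxc⟩ : ∃ x : ℝ, 0 < x ∧ x ≤ H ∧ x ≤ 1 ∧ x * K ≤ -c / 2 := by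
    refine ⟨min (min H 1) (-c / 2 / K), ?_, ?_, ?_, ?_⟩
    · refine lt_min (lt_min hH one_pos) (div_pos (by linarith) hKp)
    · exact (min_le_left _ _).trans (min_le_left _ _)
    · exact (min_le_left _ _).trans (min_le_right _ _)
    · rw [← le_div_iff₀ hKp]; exact min_le_right _ _
  have h1 := h x hx0.le hxH
  have h2 : e * x + d ≤ K := by
    have : e * x ≤ |e| * 1 := by
      calc e * x ≤ |e| * x := by gcongr; exact le_abs_self e
        _ ≤ |e| * 1 := by gcongr
    have := le_abs_self d
    linarith
  have h3 : x^2 * (e * x + d) ≤ x * (-c/2) := by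
    calc x^2 * (e * x + d) ≤ x^2 * K := by gcongr
      _ = x * (x * K) := by ring
      _ ≤ _ := by gcongr
  nlinarith

lemma exists_opt {b : ℝ} (hb : 0 < b) (hb1 : b < 1) : ∃ g g1 l : ℝ, 0 < g1 ∧ g1 ≤ g ∧ g < 1 ∧ g < l ∧
    (∀ v, (1/(1-b))*((v-g)*(v-g1)) = v*(v-l) + b*((1/(1-b))*((v+1-g)*(v+1-g1)))) ∧
    N1 b g = l * M1 b g ∧
    (∀ v, (1/(1-b))*((v-g)*(v-g1)) = (1/(1-b))*v^2 + 2*(b/(1-b)^2)*v + b*(1+b)/(1-b)^3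
      - l * ((1/(1-b))*v + b/(1-b)^2)) := by
  have hc : 0 < 1 - b := by linarith
  have hc0 : 1 - b ≠ 0 := hc.ne'
  have hcont : ContinuousOn (fun g => N1 b g / M1 b g) (Set.Icc 0 1) := by
    apply ContinuousOn.div
    · unfold N1; fun_prop
    · unfold M1; fun_prop
    · intro x hx; exact (M1_pos hb hb1 hx.1).ne'
  obtain ⟨g, hg, hmin⟩ := isCompact_Icc.exists_isMinOn (Set.nonempty_Icc.2 zero_le_one) hcont
  set l := N1 b g / M1 b g with hl
  have hN : N1 b g = l * M1 b g := by
    rw [hl, div_mul_cancel₀ _ (M1_pos hb hb1 hg.1).ne']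
  have hF : ∀ v ∈ Set.Icc (0:ℝ) 1, 0 ≤ N1 b v - l * M1 b v := by
    intro v hv
    have := hmin hv
    simp only [Set.mem_ofPred_eq] at this
    rw [← hl, le_div_iff₀ (M1_pos hb hb1 hv.1)] at this
    linarith
  -- derivative
  let G : ℝ → ℝ := fun v => (1/(1-b))*v^2 + 2*(b/(1-b)^2)*v + b*(1+b)/(1-b)^3
      - l * ((1/(1-b))*v + b/(1-b)^2)
  have hTay : ∀ u v, N1 b v - l * M1 b v - (N1 b u - l * M1 b u) = (1-b) * G u * (v-u) +
      (v-u)^2 * ((v-u)/3 + (u + (b/(1-b)) - l/2)) := by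
    intro u v
    simp only [G]; clear_value l
    unfold N1 M1; field_simp; ring
  have hG01 : G 0 = b * G 1 := by
    simp only [G]; clear_value l
    field_simp; ring
  have h01 : N1 b 0 - l * M1 b 0 = b * (N1 b 1 - l * M1 b 1) := by
    clear_value l
    unfold N1 M1; ring
  have hGq : ∀ v, G v = G 0 + (G 1 - G 0 - 1/(1-b)) * v + 1/(1-b) * v^2 := by
    intro v; simp only [G]; clear_value l; ring
  have hright : ∀ u, 0 ≤ u → u < 1 → N1 b u - l * M1 b u = 0 → 0 ≤ G u := by
    intro u hu0 hu hFu
    have := first_order (c := (1-b) * G u) (d := u + (b/(1-b)) - l/2) (e := 1/3) (H := 1 - u)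
      (by linarith) (fun x hx hx' => by
        have h1 := hTay u (u + x)
        have h2 := hF (u + x) ⟨by linarith, by linarith⟩
        rw [hFu] at h1
        have : u + x - u = x := by ring
        rw [this] at h1
        nlinarith)
    exact nonneg_of_mul_nonneg_right this hc
  have hleft : ∀ u, 0 < u → u ≤ 1 → N1 b u - l * M1 b u = 0 → G u ≤ 0 := by
    intro u hu0 hu hFu
    have := first_order (c := -((1-b) * G u)) (d := u + (b/(1-b)) - l/2) (e := -1/3) (H := u)
      (by linarith) (fun x hx hx' => by
        have h1 := hTay u (u - x)
        have h2 := hF (u - x) ⟨by linarith, by linarith⟩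
        rw [hFu] at h1
        have : u - x - u = -x := by ring
        rw [this] at h1
        nlinarith)
    have h3 : 0 ≤ (1-b) * (- G u) := by linarith
    have := nonneg_of_mul_nonneg_right h3 hc
    linarith
  have hFg : N1 b g - l * M1 b g = 0 := by linarith
  have hnot : ¬ (N1 b 1 - l * M1 b 1 = 0) := by
    intro h1
    have h0 : N1 b 0 - l * M1 b 0 = 0 := by rw [h01, h1, mul_zero]
    have a1 := hright 0 le_rfl one_pos h0
    have a2 := hleft 1 one_pos le_rfl h1
    have a3 : G 1 = 0 := by
      rw [hG01] at a1
      exact le_antisymm a2 (nonneg_of_mul_nonneg_right a1 hb)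
    have a4 := hTay 0 1
    have a5 := hTay 1 0
    have a6 : G 0 = 0 := by rw [hG01, a3, mul_zero]
    rw [h0, h1, a6] at a4
    rw [h0, h1, a3] at a5
    nlinarith
  have hg1 : g < 1 := lt_of_le_of_ne hg.2 (fun h => hnot (h ▸ hFg))
  have hg0 : 0 < g := by
    refine lt_of_le_of_ne hg.1 (fun h => hnot ?_)
    rw [← h, h01] at hFg
    exact (mul_eq_zero.1 hFg).resolve_left hb.ne'
  have hGg : G g = 0 := le_antisymm (hleft g hg0 hg1.le hFg) (hright g hg.1 hg1 hFg)
  -- the other root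
  obtain ⟨g1, hg1def⟩ : ∃ g1 : ℝ, g1 = l - 2 * (b/(1-b)) - g := ⟨_, rfl⟩
  have hfac : ∀ v, G v = (1/(1-b))*((v-g)*(v-g1)) := by
    intro v
    have : G v = G v - G g := by rw [hGg, sub_zero]
    rw [this, hg1def]
    simp only [G]; clear_value l
    field_simp; ring
  have hlt : g1 < g := by
    have h1 := hTay g 0
    have h2 := hF 0 ⟨le_rfl, zero_le_one⟩
    rw [hFg, hGg] at h1
    have h3 : 0 ≤ g^2 * ((0-g)/3 + (g + (b/(1-b)) - l/2)) := by nlinarith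
    have := nonneg_of_mul_nonneg_right h3 (by positivity)
    linarith
  have hA : 0 < 1/(1-b) := by positivity
  have hg1pos : 0 < g1 := by
    have h1 : 0 < G 1 := by
      rw [hfac]
      exact mul_pos hA (mul_pos (by linarith) (by linarith))
    have h2 : 0 < G 0 := by rw [hG01]; positivity
    rw [hfac] at h2
    have h3 : 0 < (0-g)*(0-g1) := (mul_pos_iff_of_pos_left hA).1 h2
    nlinarith
  have hrec : ∀ v, G v = v*(v-l) + b * G (v+1) := by
    intro v
    simp only [G]; clear_value l
    field_simp; ring
  refine ⟨g, g1, l, hg1pos, hlt.le, hg1, ?_, ?_, hN, ?_⟩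
  · have h1 := hrec g
    have h2 : 0 < G (g+1) := by
      rw [hfac]
      exact mul_pos hA (mul_pos (by linarith) (by linarith))
    rw [hGg] at h1
    nlinarith [mul_pos hb h2]
  · intro v
    rw [← hfac, ← hfac]; exact hrec v
  · intro v
    rw [← hfac]

lemma shift_integral (f : ℝ → ℝ) (a : ℝ) :
    ∫ v in Set.Ioi a, f (v + 1) = ∫ v in Set.Ioi (a + 1), f v := by
  have h := (measurePreserving_add_right (volume : Measure ℝ) 1).setIntegral_preimage_emb
    (measurableEmbedding_addRight 1) f (Set.Ioi (a + 1))
  rw [← h]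
  congr 2
  ext x; simp

lemma shift_integrable {f : ℝ → ℝ} {a : ℝ} (hf : IntegrableOn f (Set.Ioi (a + 1))) :
    IntegrableOn (fun v => f (v + 1)) (Set.Ioi a) := by
  have h := (measurePreserving_add_right (volume : Measure ℝ) 1).integrableOn_comp_preimage
    (measurableEmbedding_addRight 1) (f := f) (s := Set.Ioi (a + 1))
  have h2 := h.2 hf
  have : (fun x : ℝ => x + 1) ⁻¹' Set.Ioi (a + 1) = Set.Ioi a := by ext x; simp
  rw [this] at h2
  exact h2

lemma split_Ioi {f : ℝ → ℝ} {a c : ℝ} (hac : a ≤ c) (hf : IntegrableOn f (Set.Ioi a)) :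
    ∫ v in Set.Ioi a, f v = (∫ v in a..c, f v) + ∫ v in Set.Ioi c, f v := by
  rw [intervalIntegral.integral_of_le hac, ← setIntegral_union _ measurableSet_Ioi
    (hf.mono_set (Set.Ioc_subset_Ioi_self)) (hf.mono_set (Set.Ioi_subset_Ioi hac)),
    Set.Ioc_union_Ioi_eq_Ioi hac]
  exact Set.Ioc_disjoint_Ioi le_rfl

lemma ii_of {f : ℝ → ℝ} {a c : ℝ} (ha : 0 ≤ a) (hac : a ≤ c) (hf : IntegrableOn f (Set.Ioi 0)) :
    IntervalIntegrable f volume a c := by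
  rw [intervalIntegrable_iff_integrableOn_Ioc_of_le hac]
  exact hf.mono_set (Set.Ioc_subset_Ioi_self.trans (Set.Ioi_subset_Ioi ha))

lemma ray_ineq {b g g1 l C : ℝ} {G p : ℝ → ℝ} (hb : 0 < b) (hg1 : 0 < g1) (hg1g : g1 ≤ g)
    (hg : g < 1) (hgl : g < l) (hGc : Continuous G)
    (hrec : ∀ v, G v = v * (v - l) + b * G (v + 1))
    (hGa : ∀ v, 0 ≤ v → v ≤ g1 → 0 ≤ G v) (hGb : ∀ v, g ≤ v → 0 ≤ G v)
    (hGn : ∀ v, g1 ≤ v → v ≤ g → G v ≤ 0)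
    (hF : 0 ≤ (∫ v in (0:ℝ)..g, G v) + b * ∫ v in g..1, G v)
    (hp0 : ∀ r, 0 ≤ p r) (hpC : ∀ r, p r ≤ C)
    (hp : ∀ r s, 0 < r → 0 < s → |r - s| ≤ 1 → b * p r ≤ p s)
    (hGp : IntegrableOn (fun r => G r * p r) (Set.Ioi 0))
    (hwp : IntegrableOn (fun r => r * (r - l) * p r) (Set.Ioi 0)) :
    0 ≤ ∫ r in Set.Ioi (0:ℝ), r * (r - l) * p r := by
  have hg0 : 0 < g := hg1.trans_le hg1g
  -- the constant
  obtain ⟨m, hm0, hm1, hm2⟩ : ∃ m : ℝ, 0 ≤ m ∧ (∀ r, g1 ≤ r → r ≤ g → p r ≤ m) ∧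
      (∀ u, g ≤ u → u ≤ 1 + g1 → b * m ≤ p u) := by
    have hbdd : BddAbove (p '' Set.Icc g1 g) := ⟨C, by rintro _ ⟨r, _, rfl⟩; exact hpC r⟩
    have hle : ∀ r, g1 ≤ r → r ≤ g → p r ≤ sSup (p '' Set.Icc g1 g) := fun r h1 h2 =>
      le_csSup hbdd ⟨r, ⟨h1, h2⟩, rfl⟩
    refine ⟨sSup (p '' Set.Icc g1 g), (hp0 g).trans (hle g hg1g le_rfl), hle, ?_⟩
    intro u hu1 hu2
    rw [mul_comm, ← le_div_iff₀ hb]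
    apply csSup_le (Set.Nonempty.image p (Set.nonempty_Icc.2 hg1g))
    rintro _ ⟨r, hr, rfl⟩
    rw [le_div_iff₀ hb, mul_comm]
    apply hp r u (hg1.trans_le hr.1) (hg0.trans_le hu1)
    rw [abs_le]; constructor <;> linarith [hr.1, hr.2]
  have hGp' : IntegrableOn (fun r => G (r+1) * p (r+1)) (Set.Ioi 0) :=
    shift_integrable (f := fun r => G r * p r) (hGp.mono_set (Set.Ioi_subset_Ioi (by norm_num)))
  have step1 : ∫ r in g..(g+1), G r * p r ≤ ∫ r in Set.Ioi g, r * (r - l) * p r := by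
    have e1 : ∫ r in g..(g+1), G r * p r = (∫ r in Set.Ioi g, G r * p r) -
        ∫ r in Set.Ioi g, G (r+1) * p (r+1) := by
      rw [shift_integral (fun r => G r * p r) g, split_Ioi (by linarith : g ≤ g+1)
        (hGp.mono_set (Set.Ioi_subset_Ioi hg0.le))]
      ring
    rw [e1, ← integral_sub (hGp.mono_set (Set.Ioi_subset_Ioi hg0.le))
      (hGp'.mono_set (Set.Ioi_subset_Ioi hg0.le))]
    apply setIntegral_mono_on ((hGp.mono_set (Set.Ioi_subset_Ioi hg0.le)).sub
      (hGp'.mono_set (Set.Ioi_subset_Ioi hg0.le))) (hwp.mono_set (Set.Ioi_subset_Ioi hg0.le))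
      measurableSet_Ioi
    intro r hr
    have hr' : g < r := hr
    have h1 := hp r (r+1) (by linarith) (by linarith) (by simp)
    have h2 := hGb (r+1) (by linarith)
    change G r * p r - G (r+1) * p (r+1) ≤ r * (r - l) * p r
    rw [hrec r]
    nlinarith
  rw [split_Ioi hg0.le hwp]
  have e2 : ∫ r in g..(g+1), G r * p r = (∫ r in g..1, G r * p r) +
      ∫ r in (0:ℝ)..g, G (r+1) * p (r+1) := by
    rw [intervalIntegral.integral_comp_add_right (fun r => G r * p r), zero_add,
      intervalIntegral.integral_add_adjacent_intervals]
    · exact ii_of hg0.le hg.le hGp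
    · exact ii_of zero_le_one (by linarith) hGp
  have step2 : (∫ r in g..1, G r * (b * m)) ≤ ∫ r in g..1, G r * p r := by
    apply intervalIntegral.integral_mono_on_of_le_Ioo hg.le
      ((hGc.mul continuous_const).intervalIntegrable _ _) (ii_of hg0.le hg.le hGp)
    intro r hr
    exact mul_le_mul_of_nonneg_left (hm2 r hr.1.le (by linarith [hr.2])) (hGb r hr.1.le)
  have step3 : (∫ r in (0:ℝ)..g, G r * m) ≤
      ∫ r in (0:ℝ)..g, (r * (r - l) * p r + G (r+1) * p (r+1)) := by
    apply intervalIntegral.integral_mono_on_of_le_Ioo hg0.le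
      ((hGc.mul continuous_const).intervalIntegrable _ _)
      ((ii_of le_rfl hg0.le hwp).add (ii_of le_rfl hg0.le hGp'))
    intro r hr
    have hr0 : 0 < r := hr.1
    have hrg : r < g := hr.2
    have hw : r * (r - l) ≤ 0 := mul_nonpos_of_nonneg_of_nonpos hr0.le (by linarith)
    have hG1 := hGb (r+1) (by linarith)
    have hpr := hp r (r+1) hr0 (by linarith) (by simp)
    have hpr0 := hp0 r
    rcases le_total r g1 with h | h
    · have h1 := hm2 (r+1) (by linarith) (by linarith)
      have h2 := hGa r hr0.le h
      -- multiply by b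
      have key : b * (G r * m) ≤ b * (r * (r - l) * p r + G (r+1) * p (r+1)) := by
        calc b * (G r * m) = G r * (b * m) := by ring
          _ ≤ G r * p (r+1) := mul_le_mul_of_nonneg_left h1 h2
          _ = r * (r - l) * p (r+1) + b * G (r+1) * p (r+1) := by rw [hrec r]; ring
          _ ≤ r * (r - l) * (b * p r) + b * G (r+1) * p (r+1) := by
            have := mul_le_mul_of_nonpos_left hpr hw
            linarith
          _ = _ := by ring
      exact le_of_mul_le_mul_left key hb
    · have h1 := hm1 r h hrg.le
      have h2 := hGn r h hrg.le
      calc G r * m ≤ G r * p r := mul_le_mul_of_nonpos_left h1 h2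
        _ = r * (r - l) * p r + G (r+1) * (b * p r) := by rw [hrec r]; ring
        _ ≤ _ := by
          have := mul_le_mul_of_nonneg_left hpr hG1
          linarith
  rw [intervalIntegral.integral_add (ii_of le_rfl hg0.le hwp) (ii_of le_rfl hg0.le hGp')] at step3
  rw [intervalIntegral.integral_mul_const] at step2 step3
  have := mul_nonneg hm0 hF
  nlinarith

def s1 (ε γ r : ℝ) : ℝ :=
  if r < (⌊r⌋ : ℝ) + γ then Real.exp (-(⌊r⌋ : ℝ) * ε) else Real.exp (-((⌊r⌋ : ℝ) + 1) * ε)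

lemma s1_meas (ε γ : ℝ) : Measurable (s1 ε γ) := by
  have hfl : Measurable (fun r : ℝ => (⌊r⌋ : ℝ)) := by
    exact (measurable_from_top (f := fun n : ℤ => (n : ℝ))).comp Int.measurable_floor
  unfold s1
  apply Measurable.ite
  · exact measurableSet_lt measurable_id (hfl.add_const γ)
  · fun_prop
  · fun_prop

lemma s1_pos (ε γ r : ℝ) : 0 < s1 ε γ r := by
  unfold s1; split_ifs <;> positivity

lemma s1_le_fl {ε γ r : ℝ} (hε : 0 < ε) : s1 ε γ r ≤ Real.exp (-(⌊r⌋ : ℝ) * ε) := by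
  unfold s1; split_ifs
  · exact le_rfl
  · apply Real.exp_le_exp.2; nlinarith

lemma fl_le_s1 {ε γ r : ℝ} (hε : 0 < ε) : Real.exp (-((⌊r⌋ : ℝ)+1) * ε) ≤ s1 ε γ r := by
  unfold s1; split_ifs
  · apply Real.exp_le_exp.2; nlinarith
  · exact le_rfl

lemma s1_anti {ε γ : ℝ} (hε : 0 < ε) : Antitone (s1 ε γ) := by
  intro r s hrs
  rcases (Int.floor_mono hrs).eq_or_lt with h | h
  · unfold s1
    rw [← h]
    split_ifs with h1 h2 h2
    · exact le_rfl
    · exact absurd (hrs.trans_lt h1) h2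
    · apply Real.exp_le_exp.2; nlinarith
    · exact le_rfl
  · refine (s1_le_fl hε).trans (le_trans ?_ (fl_le_s1 hε))
    apply Real.exp_le_exp.2
    have : (⌊r⌋ : ℝ) + 1 ≤ ⌊s⌋ := by exact_mod_cast h
    nlinarith

lemma s1_add_one (ε γ r : ℝ) : s1 ε γ (r + 1) = Real.exp (-ε) * s1 ε γ r := by
  unfold s1
  rw [Int.floor_add_one]
  push_cast
  have : (r + 1 < (⌊r⌋:ℝ) + 1 + γ) ↔ (r < (⌊r⌋:ℝ) + γ) := by constructor <;> intro h <;> linarith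
  simp only [this]
  split_ifs <;> rw [← Real.exp_add] <;> congr 1 <;> ring

lemma s1_lo {ε γ r : ℝ} (hr : 0 ≤ r) (hrg : r < γ) (hr1 : r < 1) : s1 ε γ r = 1 := by
  have : ⌊r⌋ = 0 := Int.floor_eq_zero_iff.2 ⟨hr, hr1⟩
  unfold s1; rw [this]; simp [hrg]

lemma s1_hi {ε γ r : ℝ} (hr : 0 ≤ r) (hrg : γ ≤ r) (hr1 : r < 1) : s1 ε γ r = Real.exp (-ε) := by
  have : ⌊r⌋ = 0 := Int.floor_eq_zero_iff.2 ⟨hr, hr1⟩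
  unfold s1; rw [this]; simp [hrg]

lemma s1_le_exp {ε γ r : ℝ} (hε : 0 < ε) : s1 ε γ r ≤ Real.exp ε * Real.exp (-ε * r) := by
  refine (s1_le_fl hε).trans ?_
  rw [← Real.exp_add]
  apply Real.exp_le_exp.2
  have := Int.lt_floor_add_one r
  nlinarith

lemma s1_int {ε γ : ℝ} (hε : 0 < ε) (n : ℕ) :
    IntegrableOn (fun r => r ^ n * s1 ε γ r) (Set.Ioi 0) := by
  have h1 : IntegrableOn (fun r : ℝ => Real.exp ε * (r ^ n * Real.exp (-ε * r))) (Set.Ioi 0) := by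
    have := integrableOn_rpow_mul_exp_neg_mul_rpow (p := 1) (s := n) (b := ε)
      (by have : (0:ℝ) ≤ n := Nat.cast_nonneg n
          linarith) one_pos hε
    simp only [Real.rpow_natCast, Real.rpow_one] at this
    exact this.const_mul _
  refine Integrable.mono' h1 ?_ ?_
  · exact ((measurable_id.pow_const n).mul (s1_meas ε γ)).aestronglyMeasurable
  · filter_upwards [ae_restrict_mem measurableSet_Ioi] with r hr
    have hr : 0 < r := hr
    rw [Real.norm_of_nonneg (mul_nonneg (by positivity) (s1_pos _ _ _).le)]
    calc r ^ n * s1 ε γ r ≤ r ^ n * (Real.exp ε * Real.exp (-ε * r)) := by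
          gcongr; exact s1_le_exp hε
      _ = _ := by ring

lemma s1_integral {ε γ : ℝ} (hε : 0 < ε) (hγ0 : 0 ≤ γ) (hγ1 : γ ≤ 1) (G : ℝ → ℝ)
    (hGs : IntegrableOn (fun r => G r * s1 ε γ r) (Set.Ioi 0)) :
    ∫ r in Set.Ioi (0:ℝ), (G r - Real.exp (-ε) * G (r+1)) * s1 ε γ r =
      (∫ v in (0:ℝ)..γ, G v) + Real.exp (-ε) * ∫ v in γ..1, G v := by
  have hGs' : IntegrableOn (fun r => G (r+1) * s1 ε γ (r+1)) (Set.Ioi 0) :=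
    shift_integrable (f := fun r => G r * s1 ε γ r) (hGs.mono_set (Set.Ioi_subset_Ioi (by norm_num)))
  have e1 : ∀ r, (G r - Real.exp (-ε) * G (r+1)) * s1 ε γ r = G r * s1 ε γ r - G (r+1) * s1 ε γ (r+1) := by
    intro r; rw [s1_add_one]; ring
  simp_rw [e1]
  rw [integral_sub hGs hGs', shift_integral (fun r => G r * s1 ε γ r) 0,
    split_Ioi (by norm_num : (0:ℝ) ≤ 0 + 1) hGs, add_sub_cancel_right, zero_add,
    ← intervalIntegral.integral_add_adjacent_intervals (ii_of le_rfl hγ0 hGs) (ii_of hγ0 hγ1 hGs),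
    ← intervalIntegral.integral_const_mul]
  congr 1
  · rw [intervalIntegral.integral_of_le hγ0, intervalIntegral.integral_of_le hγ0,
      integral_Ioc_eq_integral_Ioo, integral_Ioc_eq_integral_Ioo]
    apply setIntegral_congr_fun measurableSet_Ioo
    intro r hr
    simp only
    rw [s1_lo hr.1.le hr.2 (hr.2.trans_le hγ1), mul_one]
  · rw [intervalIntegral.integral_of_le hγ1, intervalIntegral.integral_of_le hγ1,
      integral_Ioc_eq_integral_Ioo, integral_Ioc_eq_integral_Ioo]
    apply setIntegral_congr_fun measurableSet_Ioo
    intro r hr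
    simp only
    rw [s1_hi (hγ0.trans hr.1.le) hr.1.le hr.2, mul_comm]

lemma quad_integral (A B C x y : ℝ) : ∫ v in x..y, (A * v^2 + B * v + C) =
    A * (y^3 - x^3)/3 + B * (y^2 - x^2)/2 + C * (y - x) := by
  rw [intervalIntegral.integral_add, intervalIntegral.integral_add,
    intervalIntegral.integral_const_mul, intervalIntegral.integral_const_mul, integral_pow,
    integral_id, intervalIntegral.integral_const, smul_eq_mul]
  · norm_num; ring
  all_goals apply Continuous.intervalIntegrable; fun_prop

lemma quad_s1 {ε γ : ℝ} (hε : 0 < ε) (A B C : ℝ) :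
    IntegrableOn (fun r => (A * r^2 + B * r + C) * s1 ε γ r) (Set.Ioi 0) := by
  have h := (((s1_int (γ := γ) hε 2).const_mul A).add ((s1_int (γ := γ) hε 1).const_mul B)).add
    ((s1_int (γ := γ) hε 0).const_mul C)
  refine h.congr (Eventually.of_forall fun r => ?_)
  simp only [Pi.add_apply]
  ring

lemma s1_M {ε γ : ℝ} (hε : 0 < ε) (hγ0 : 0 ≤ γ) (hγ1 : γ ≤ 1) :
    ∫ r in Set.Ioi (0:ℝ), r * s1 ε γ r = M1 (Real.exp (-ε)) γ := by
  have hb1 : Real.exp (-ε) < 1 := by rw [Real.exp_lt_one_iff]; linarith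
  set b := Real.exp (-ε) with hb
  have hc : 1 - b ≠ 0 := by linarith
  have h := s1_integral hε hγ0 hγ1 (fun v => 0 * v^2 + (1/(1-b)) * v + b/(1-b)^2)
    (quad_s1 hε _ _ _)
  rw [← hb, quad_integral, quad_integral] at h
  have e : ∀ r : ℝ, (0 * r^2 + (1/(1-b)) * r + b/(1-b)^2 -
    b * (0 * (r+1)^2 + (1/(1-b)) * (r+1) + b/(1-b)^2)) = r := by
    intro r; clear_value b; field_simp; ring
  simp_rw [e] at h
  rw [h]; unfold M1; ring

lemma s1_N {ε γ : ℝ} (hε : 0 < ε) (hγ0 : 0 ≤ γ) (hγ1 : γ ≤ 1) :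
    ∫ r in Set.Ioi (0:ℝ), r^2 * s1 ε γ r = N1 (Real.exp (-ε)) γ := by
  have hb1 : Real.exp (-ε) < 1 := by rw [Real.exp_lt_one_iff]; linarith
  set b := Real.exp (-ε) with hb
  have hc : 1 - b ≠ 0 := by linarith
  have h := s1_integral hε hγ0 hγ1 (fun v => 1/(1-b) * v^2 + (2*(b/(1-b)^2)) * v + b*(1+b)/(1-b)^3)
    (quad_s1 hε _ _ _)
  rw [← hb, quad_integral, quad_integral] at h
  have e : ∀ r : ℝ, (1/(1-b) * r^2 + (2*(b/(1-b)^2)) * r + b*(1+b)/(1-b)^3 -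
    b * (1/(1-b) * (r+1)^2 + (2*(b/(1-b)^2)) * (r+1) + b*(1+b)/(1-b)^3)) = r^2 := by
    intro r; clear_value b; field_simp; ring
  simp_rw [e] at h
  rw [h]; unfold N1; ring

def cth (θ : ℝ) : ℝ := |Real.cos θ| + |Real.sin θ|

lemma cth_one_le (θ : ℝ) : 1 ≤ cth θ := by
  unfold cth
  have h := Real.sin_sq_add_cos_sq θ
  have h1 := abs_nonneg (Real.cos θ)
  have h2 := abs_nonneg (Real.sin θ)
  rw [← sq_abs (Real.cos θ), ← sq_abs (Real.sin θ)] at h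
  nlinarith

lemma cth_pos (θ : ℝ) : 0 < cth θ := one_pos.trans_le (cth_one_le θ)

lemma cth_meas : Measurable cth := by unfold cth; fun_prop

lemma l1_meas : Measurable l1 := by unfold l1; fun_prop

/-- radial average -/
def Prad (Δ : ℝ) (f : ℝ × ℝ → ℝ≥0∞) (r : ℝ) : ℝ≥0∞ :=
  ∫⁻ θ in Set.Ioo (-π) π, ENNReal.ofReal (Δ^2 / cth θ^2) *
    f (Δ / cth θ * r * Real.cos θ, Δ / cth θ * r * Real.sin θ)

lemma scale_lint (g : ℝ → ℝ≥0∞) {k : ℝ} (hk : 0 < k) :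
    ∫⁻ r in Set.Ioi (0:ℝ), g r = ∫⁻ r in Set.Ioi (0:ℝ), ENNReal.ofReal k * g (k * r) := by
  have him : (fun r => k * r) '' Set.Ioi (0:ℝ) = Set.Ioi 0 := by
    rw [Set.image_mul_left_Ioi hk, mul_zero]
  have h := lintegral_image_eq_lintegral_abs_deriv_mul (s := Set.Ioi (0:ℝ)) (f := fun r => k * r)
    (f' := fun _ => k) measurableSet_Ioi
    (fun x _ => by simpa using ((hasDerivAt_id x).const_mul k).hasDerivWithinAt)
    (fun x _ y _ hxy => mul_left_cancel₀ hk.ne' hxy) g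
  rw [him, abs_of_pos hk] at h
  exact h

lemma l1_ray {Δ r θ : ℝ} (hΔ : 0 < Δ) :
    l1 (Δ / cth θ * r * Real.cos θ, Δ / cth θ * r * Real.sin θ) = Δ * |r| := by
  have hc := cth_pos θ
  have : |Real.cos θ| + |Real.sin θ| = cth θ := rfl
  unfold l1
  simp only [abs_mul, abs_div, abs_of_pos hΔ, abs_of_pos hc]
  rw [← mul_add, this]
  field_simp

lemma polar_l1 {Δ : ℝ} (hΔ : 0 < Δ) {f : ℝ × ℝ → ℝ≥0∞} (hf : Measurable f) {h : ℝ → ℝ≥0∞}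
    (hh : Measurable h) :
    ∫⁻ x, h (l1 x / Δ) * f x =
      ∫⁻ r in Set.Ioi (0:ℝ), ENNReal.ofReal r * (h r * Prad Δ f r) := by
  have hm := l1_meas
  have hcm := cth_meas
  rw [← lintegral_comp_polarCoord_symm]
  simp only [polarCoord_target, polarCoord_symm_apply, smul_eq_mul]
  rw [Measure.volume_eq_prod, ← Measure.prod_restrict, lintegral_prod_symm']
  swap
  · fun_prop
  have e1 : ∀ θ : ℝ, ∫⁻ ρ in Set.Ioi (0:ℝ), ENNReal.ofReal ρ *
      (h (l1 (ρ * Real.cos θ, ρ * Real.sin θ) / Δ) * f (ρ * Real.cos θ, ρ * Real.sin θ)) =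
      ∫⁻ r in Set.Ioi (0:ℝ), ENNReal.ofReal r * (h r * (ENNReal.ofReal (Δ^2 / cth θ^2) *
        f (Δ / cth θ * r * Real.cos θ, Δ / cth θ * r * Real.sin θ))) := by
    intro θ
    have hc := cth_pos θ
    have hk : 0 < Δ / cth θ := by positivity
    rw [scale_lint _ hk]
    apply setLIntegral_congr_fun measurableSet_Ioi
    intro r hr
    have hr : 0 < r := hr
    simp only
    rw [l1_ray hΔ, abs_of_pos hr, mul_div_cancel_left₀ _ hΔ.ne', ENNReal.ofReal_mul hk.le]
    have : Δ^2 / cth θ^2 = (Δ / cth θ) * (Δ / cth θ) := by field_simp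
    rw [this, ENNReal.ofReal_mul hk.le]
    ring
  simp only [e1]
  rw [lintegral_lintegral_swap]
  · apply lintegral_congr
    intro r
    unfold Prad
    rw [lintegral_const_mul, lintegral_const_mul]
    · fun_prop
    · fun_prop
  · apply Measurable.aemeasurable
    fun_prop

lemma Prad_meas {Δ : ℝ} {f : ℝ × ℝ → ℝ≥0∞} (hf : Measurable f) : Measurable (Prad Δ f) := by
  have hcm := cth_meas
  unfold Prad
  apply Measurable.lintegral_prod_right'
    (f := fun q : ℝ × ℝ => ENNReal.ofReal (Δ^2 / cth q.2^2) *
    f (Δ / cth q.2 * q.1 * Real.cos q.2, Δ / cth q.2 * q.1 * Real.sin q.2))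
  fun_prop

lemma Prad_le {Δ : ℝ} (hΔ : 0 < Δ) {f : ℝ × ℝ → ℝ≥0∞} {E : ℝ≥0∞} (hE : E ≠ ∞)
    (h : ∀ x t, l1 t ≤ Δ → f x ≤ E * f (x + t)) {r s : ℝ} (hrs : |r - s| ≤ 1) :
    Prad Δ f r ≤ E * Prad Δ f s := by
  unfold Prad
  rw [← lintegral_const_mul' _ _ hE]
  apply lintegral_mono
  intro θ
  simp only
  have h1 := h (Δ / cth θ * r * Real.cos θ, Δ / cth θ * r * Real.sin θ)
    (Δ / cth θ * (s - r) * Real.cos θ, Δ / cth θ * (s - r) * Real.sin θ) (by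
      rw [l1_ray hΔ, abs_sub_comm]; nlinarith)
  have h2 : ((Δ / cth θ * r * Real.cos θ, Δ / cth θ * r * Real.sin θ) : ℝ × ℝ) +
    (Δ / cth θ * (s - r) * Real.cos θ, Δ / cth θ * (s - r) * Real.sin θ) =
    (Δ / cth θ * s * Real.cos θ, Δ / cth θ * s * Real.sin θ) := by
    ext <;> simp <;> ring
  rw [h2] at h1
  calc _ ≤ ENNReal.ofReal (Δ^2 / cth θ^2) * (E * _) := mul_le_mul_right h1 _
    _ = _ := by ring

lemma Prad_const (Δ r : ℝ) (C : ℝ≥0∞) : Prad Δ (fun _ => C) r = Prad Δ 1 0 * C := by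
  have hcm := cth_meas
  unfold Prad
  simp only [Pi.one_apply, mul_one]
  rw [lintegral_mul_const]
  fun_prop

lemma lint_exp_abs : ∫⁻ x : ℝ, ENNReal.ofReal (Real.exp (-|x|)) = 2 := by
  have h : ∫ x : ℝ, Real.exp (-|x|) = 2 := by
    rw [integral_comp_abs (f := fun x => Real.exp (-x)), integral_exp_neg_Ioi_zero, mul_one]
  have hi : Integrable (fun x : ℝ => Real.exp (-|x|)) := by
    by_contra hc
    rw [integral_undef hc] at h
    norm_num at h
  rw [← ofReal_integral_eq_lintegral_ofReal hi (Eventually.of_forall fun x => (Real.exp_pos _).le), h]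
  norm_num

lemma Prad_one {Δ : ℝ} (hΔ : 0 < Δ) : Prad Δ 1 0 = ENNReal.ofReal (4 * Δ^2) := by
  have h := polar_l1 hΔ (f := fun _ => 1) measurable_const
    (h := fun r => ENNReal.ofReal (Real.exp (-(Δ * r)))) (by fun_prop)
  simp only [Prad_const, mul_one] at h
  have e1 : ∫⁻ x : ℝ × ℝ, ENNReal.ofReal (Real.exp (-(Δ * (l1 x / Δ)))) = 4 := by
    have : ∀ x : ℝ × ℝ, ENNReal.ofReal (Real.exp (-(Δ * (l1 x / Δ)))) =
        ENNReal.ofReal (Real.exp (-|x.1|)) * ENNReal.ofReal (Real.exp (-|x.2|)) := by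
      intro x
      rw [mul_div_cancel₀ _ hΔ.ne', ← ENNReal.ofReal_mul (Real.exp_pos _).le, ← Real.exp_add]
      unfold l1; congr 2; ring
    simp_rw [this]
    rw [Measure.volume_eq_prod, lintegral_prod_mul (f := fun x : ℝ => ENNReal.ofReal (Real.exp (-|x|)))
      (g := fun x : ℝ => ENNReal.ofReal (Real.exp (-|x|))) (by fun_prop) (by fun_prop), lint_exp_abs]
    norm_num
  have e2 : ∫⁻ r in Set.Ioi (0:ℝ), ENNReal.ofReal r *
      (ENNReal.ofReal (Real.exp (-(Δ * r))) * Prad Δ 1 0) = ENNReal.ofReal (1 / Δ^2) * Prad Δ 1 0 := by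
    have hi := Real.integral_rpow_mul_exp_neg_mul_Ioi (a := 2) (r := Δ) two_pos hΔ
    have hG : Real.Gamma 2 = 1 := Real.Gamma_two
    rw [hG, mul_one] at hi
    norm_num at hi
    have hint : IntegrableOn (fun r : ℝ => r * Real.exp (-(Δ * r))) (Set.Ioi 0) := by
      by_contra hc
      rw [integral_undef hc] at hi
      have : (0:ℝ) < (Δ^2)⁻¹ := by positivity
      linarith
    have : ∀ r ∈ Set.Ioi (0:ℝ), ENNReal.ofReal r *
      (ENNReal.ofReal (Real.exp (-(Δ * r))) * Prad Δ 1 0) =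
      ENNReal.ofReal (r * Real.exp (-(Δ * r))) * Prad Δ 1 0 := by
      intro r hr
      have hr : 0 < r := hr
      rw [ENNReal.ofReal_mul hr.le, mul_assoc]
    rw [setLIntegral_congr_fun measurableSet_Ioi this, lintegral_mul_const _ (by fun_prop),
      ← ofReal_integral_eq_lintegral_ofReal hint, hi, one_div]
    filter_upwards [ae_restrict_mem measurableSet_Ioi] with r hr
    have hr : 0 < r := hr
    positivity
  rw [e1, e2] at h
  have h4 : ENNReal.ofReal (4 * Δ^2) = ENNReal.ofReal (Δ^2) * 4 := by
    rw [mul_comm, ENNReal.ofReal_mul (by positivity)]; norm_num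
  rw [h4, h, ← mul_assoc, ← ENNReal.ofReal_mul (by positivity), mul_one_div_cancel (by positivity)]
  simp

def moll (μ : Measure (ℝ × ℝ)) (η : ℝ) (x : ℝ × ℝ) : ℝ≥0∞ :=
  μ (Metric.closedBall x η) * (ENNReal.ofReal (4 * η^2))⁻¹

lemma vol_ball (x : ℝ × ℝ) {η : ℝ} (hη : 0 < η) :
    volume (Metric.closedBall x η) = ENNReal.ofReal (4 * η^2) := by
  rw [← closedBall_prod_same, Measure.volume_eq_prod, Measure.prod_prod, Real.volume_closedBall,
    Real.volume_closedBall, ← ENNReal.ofReal_mul (by positivity)]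
  congr 1; ring

lemma ball_set_meas (η : ℝ) : MeasurableSet {q : (ℝ × ℝ) × (ℝ × ℝ) | dist q.2 q.1 ≤ η} :=
  measurableSet_le (by fun_prop) measurable_const

lemma moll_meas (μ : Measure (ℝ × ℝ)) [IsProbabilityMeasure μ] (η : ℝ) : Measurable (moll μ η) := by
  unfold moll
  apply Measurable.mul_const
  exact measurable_measure_prodMk_left (ν := μ) (ball_set_meas η)

lemma moll_int (μ : Measure (ℝ × ℝ)) [IsProbabilityMeasure μ] {η : ℝ} (k : ℝ × ℝ → ℝ≥0∞)
    (hk : Measurable k) :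
    ∫⁻ x, k x * moll μ η x =
      ∫⁻ y, (∫⁻ x in Metric.closedBall y η, k x) * (ENNReal.ofReal (4 * η^2))⁻¹ ∂μ := by
  have hS := ball_set_meas η
  have e1 : ∀ x, k x * moll μ η x = ∫⁻ y, Set.indicator {q : (ℝ × ℝ) × (ℝ × ℝ) | dist q.2 q.1 ≤ η}
      (fun q => k q.1 * (ENNReal.ofReal (4 * η^2))⁻¹) (x, y) ∂μ := by
    intro x
    have : ∀ y, Set.indicator {q : (ℝ × ℝ) × (ℝ × ℝ) | dist q.2 q.1 ≤ η}
      (fun q => k q.1 * (ENNReal.ofReal (4 * η^2))⁻¹) (x, y) =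
      Set.indicator (Metric.closedBall x η) (fun _ => k x * (ENNReal.ofReal (4 * η^2))⁻¹) y := by
      intro y; rfl
    simp_rw [this]
    rw [lintegral_indicator Metric.isClosed_closedBall.measurableSet, setLIntegral_const]
    unfold moll; ring
  simp_rw [e1]
  rw [lintegral_lintegral_swap]
  · apply lintegral_congr
    intro y
    have : ∀ x, Set.indicator {q : (ℝ × ℝ) × (ℝ × ℝ) | dist q.2 q.1 ≤ η}
      (fun q => k q.1 * (ENNReal.ofReal (4 * η^2))⁻¹) (x, y) =
      Set.indicator (Metric.closedBall y η) (fun x => k x * (ENNReal.ofReal (4 * η^2))⁻¹) x := by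
      intro x
      simp only [Set.indicator, Metric.mem_closedBall, Set.mem_ofPred_eq, dist_comm]
    simp_rw [this]
    rw [lintegral_indicator Metric.isClosed_closedBall.measurableSet, lintegral_mul_const _ hk]
  · apply Measurable.aemeasurable
    exact Measurable.indicator (by fun_prop) hS

lemma moll_one (μ : Measure (ℝ × ℝ)) [IsProbabilityMeasure μ] {η : ℝ} (hη : 0 < η) :
    ∫⁻ x, moll μ η x = 1 := by
  have h := moll_int μ (η := η) (fun _ => 1) measurable_const
  simp only [one_mul, setLIntegral_const, vol_ball _ hη] at h
  rw [h, ENNReal.mul_inv_cancel (by simp; positivity) ENNReal.ofReal_ne_top]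
  simp

lemma l1_nonneg (x : ℝ × ℝ) : 0 ≤ l1 x := by unfold l1; positivity

lemma moll_cost (μ : Measure (ℝ × ℝ)) [IsProbabilityMeasure μ] {η : ℝ} (hη : 0 < η) :
    ∫⁻ x, ENNReal.ofReal (l1 x) * moll μ η x ≤ cost μ + ENNReal.ofReal (2 * η) := by
  have hm := l1_meas
  rw [moll_int μ (η := η) (fun x => ENNReal.ofReal (l1 x)) (by fun_prop)]
  calc _ ≤ ∫⁻ y, (ENNReal.ofReal (l1 y) + ENNReal.ofReal (2 * η)) ∂μ := by
        apply lintegral_mono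
        intro y
        simp only
        calc (∫⁻ x in Metric.closedBall y η, ENNReal.ofReal (l1 x)) * (ENNReal.ofReal (4 * η^2))⁻¹
            ≤ (∫⁻ x in Metric.closedBall y η, ENNReal.ofReal (l1 y + 2 * η)) *
              (ENNReal.ofReal (4 * η^2))⁻¹ := by
              gcongr ?_ * _
              apply setLIntegral_mono measurable_const
              intro x hx
              apply ENNReal.ofReal_le_ofReal
              rw [Metric.mem_closedBall, Prod.dist_eq, max_le_iff, Real.dist_eq, Real.dist_eq] at hx
              unfold l1
              have h1 := abs_sub_abs_le_abs_sub x.1 y.1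
              have h2 := abs_sub_abs_le_abs_sub x.2 y.2
              linarith [hx.1, hx.2]
          _ = ENNReal.ofReal (l1 y + 2 * η) := by
              rw [setLIntegral_const, vol_ball _ hη, mul_assoc,
                ENNReal.mul_inv_cancel (by simp; positivity) ENNReal.ofReal_ne_top, mul_one]
          _ = _ := ENNReal.ofReal_add (l1_nonneg y) (by positivity)
    _ = _ := by
        rw [lintegral_add_right _ measurable_const]
        simp [cost]

lemma moll_dp {ε Δ η : ℝ} {μ : Measure (ℝ × ℝ)} (h : DPC ε Δ μ) (x t : ℝ × ℝ) (ht : l1 t ≤ Δ) :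
    moll μ η x ≤ ENNReal.ofReal (Real.exp ε) * moll μ η (x + t) := by
  have h1 := h (Metric.closedBall x η) Metric.isClosed_closedBall.measurableSet t ht
  have h2 : (· + t) '' Metric.closedBall x η = Metric.closedBall (x + t) η := by
    ext y
    simp only [Set.image_add_right, Set.mem_preimage, Metric.mem_closedBall, dist_eq_norm]
    congr! 2
    abel
  rw [h2] at h1
  unfold moll
  rw [← mul_assoc]
  gcongr

lemma lower_bound {ε Δ : ℝ} (hε : 0 < ε) (hΔ : 0 < Δ) {g g1 l : ℝ} (hg1 : 0 < g1) (hg1g : g1 ≤ g)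
    (hg : g < 1) (hgl : g < l)
    (hrec : ∀ v, (1/(1-Real.exp (-ε)))*((v-g)*(v-g1)) = v*(v-l) +
      Real.exp (-ε)*((1/(1-Real.exp (-ε)))*((v+1-g)*(v+1-g1))))
    (hF : 0 ≤ (∫ v in (0:ℝ)..g, (1/(1-Real.exp (-ε)))*((v-g)*(v-g1))) +
      Real.exp (-ε) * ∫ v in g..1, (1/(1-Real.exp (-ε)))*((v-g)*(v-g1)))
    (μ : Measure (ℝ × ℝ)) [IsProbabilityMeasure μ] (hμ : DPC ε Δ μ) :
    ENNReal.ofReal (Δ * l) ≤ cost μ := by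
  by_cases hfin : cost μ = ∞
  · rw [hfin]; exact le_top
  have hb1 : Real.exp (-ε) < 1 := by rw [Real.exp_lt_one_iff]; linarith
  have hA : 0 < 1 / (1 - Real.exp (-ε)) := by
    have : 0 < 1 - Real.exp (-ε) := by linarith
    positivity
  have main : ∀ η : ℝ, 0 < η → ENNReal.ofReal (Δ * l) ≤ cost μ + ENNReal.ofReal (2 * η) := by
    intro η hη
    have hfm := moll_meas μ η
    set f := moll μ η with hf
    set P := Prad Δ f with hP
    have hPm : Measurable P := Prad_meas hfm
    obtain ⟨D, hD, hPD⟩ : ∃ D : ℝ≥0∞, D ≠ ∞ ∧ ∀ r, P r ≤ D := by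
      refine ⟨Prad Δ 1 0 * (ENNReal.ofReal (4 * η^2))⁻¹, ?_, ?_⟩
      · rw [Prad_one hΔ]
        apply ENNReal.mul_ne_top ENNReal.ofReal_ne_top
        simp; positivity
      · intro r
        rw [← Prad_const Δ r]
        apply lintegral_mono
        intro θ
        simp only
        gcongr
        simp only [hf, moll]
        calc _ ≤ 1 * (ENNReal.ofReal (4 * η^2))⁻¹ := by gcongr; exact prob_le_one
          _ = _ := one_mul _
    have hPfin : ∀ r, P r ≠ ∞ := fun r => ne_top_of_le_ne_top hD (hPD r)
    set p : ℝ → ℝ := fun r => (P r).toReal with hp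
    have hpm : Measurable p := hPm.ennreal_toReal
    have hp0 : ∀ r, 0 ≤ p r := fun r => ENNReal.toReal_nonneg
    have hpC : ∀ r, p r ≤ D.toReal := fun r => ENNReal.toReal_mono hD (hPD r)
    have hpe : ∀ r, ENNReal.ofReal (p r) = P r := fun r => ENNReal.ofReal_toReal (hPfin r)
    have hpdp : ∀ r s, 0 < r → 0 < s → |r - s| ≤ 1 → Real.exp (-ε) * p r ≤ p s := by
      intro r s _ _ hrs
      have h1 : P r ≤ ENNReal.ofReal (Real.exp ε) * P s :=
        Prad_le hΔ ENNReal.ofReal_ne_top (fun x t ht => moll_dp hμ x t ht) hrs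
      have h2 := ENNReal.toReal_mono (ENNReal.mul_ne_top ENNReal.ofReal_ne_top (hPfin s)) h1
      rw [ENNReal.toReal_mul, ENNReal.toReal_ofReal (Real.exp_pos _).le] at h2
      calc Real.exp (-ε) * p r ≤ Real.exp (-ε) * (Real.exp ε * p s) := by gcongr
        _ = p s := by rw [← mul_assoc, ← Real.exp_add]; simp
    -- integrals
    have hI1 : ∫⁻ r in Set.Ioi (0:ℝ), ENNReal.ofReal (r * p r) = 1 := by
      have h := polar_l1 hΔ hfm (h := fun _ => 1) measurable_const
      simp only [one_mul] at h
      rw [hf, moll_one μ hη] at h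
      rw [h]
      apply setLIntegral_congr_fun measurableSet_Ioi
      intro r hr
      have hr : 0 < r := hr
      simp only
      rw [ENNReal.ofReal_mul hr.le, hpe]
    have hI2 : ∫⁻ r in Set.Ioi (0:ℝ), ENNReal.ofReal (Δ * (r * (r * p r))) ≤
        cost μ + ENNReal.ofReal (2 * η) := by
      refine le_trans (le_of_eq ?_) (moll_cost μ hη)
      have h := polar_l1 hΔ hfm (h := fun r => ENNReal.ofReal (Δ * r)) (by fun_prop)
      have : ∀ x, Δ * (l1 x / Δ) = l1 x := fun x => by field_simp
      simp only [this] at h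
      rw [← hf, h]
      apply setLIntegral_congr_fun measurableSet_Ioi
      intro r hr
      have hr : 0 < r := hr
      simp only
      rw [ENNReal.ofReal_mul hΔ.le, ENNReal.ofReal_mul hr.le, ENNReal.ofReal_mul hr.le, hpe,
        ENNReal.ofReal_mul hΔ.le]
      ring
    have hnn1 : 0 ≤ᵐ[volume.restrict (Set.Ioi (0:ℝ))] fun r => r * p r := by
      filter_upwards [ae_restrict_mem measurableSet_Ioi] with r hr
      exact mul_nonneg (le_of_lt hr) (hp0 r)
    have hnn2 : 0 ≤ᵐ[volume.restrict (Set.Ioi (0:ℝ))] fun r => Δ * (r * (r * p r)) := by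
      filter_upwards [ae_restrict_mem measurableSet_Ioi] with r hr
      have hr : 0 < r := hr
      have := hp0 r
      simp only [Pi.zero_apply]
      positivity
    have hint1 : IntegrableOn (fun r => r * p r) (Set.Ioi 0) := by
      refine ⟨(by fun_prop : Measurable fun r => r * p r).aestronglyMeasurable, ?_⟩
      rw [hasFiniteIntegral_iff_ofReal hnn1, hI1]
      exact ENNReal.one_lt_top
    have hfin2 : cost μ + ENNReal.ofReal (2 * η) < ∞ :=
      ENNReal.add_lt_top.2 ⟨lt_top_iff_ne_top.2 hfin, ENNReal.ofReal_lt_top⟩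
    have hint2' : IntegrableOn (fun r => Δ * (r * (r * p r))) (Set.Ioi 0) := by
      refine ⟨(by fun_prop : Measurable fun r => Δ * (r * (r * p r))).aestronglyMeasurable, ?_⟩
      rw [hasFiniteIntegral_iff_ofReal hnn2]
      exact hI2.trans_lt hfin2
    have hint2 : IntegrableOn (fun r => r * (r * p r)) (Set.Ioi 0) := by
      have := hint2'.const_mul Δ⁻¹
      refine this.congr (Eventually.of_forall fun r => ?_)
      simp only; field_simp
    have hint0 : IntegrableOn p (Set.Ioi 0) := by
      rw [← Set.Ioc_union_Ioi_eq_Ioi (zero_le_one : (0:ℝ) ≤ 1)]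
      apply IntegrableOn.union
      · refine Measure.integrableOn_of_bounded (M := D.toReal) (by simp) hpm.aestronglyMeasurable ?_
        filter_upwards with r
        rw [Real.norm_of_nonneg (hp0 r)]; exact hpC r
      · refine Integrable.mono' (hint1.mono_set (Set.Ioi_subset_Ioi zero_le_one))
          hpm.aestronglyMeasurable ?_
        filter_upwards [ae_restrict_mem measurableSet_Ioi] with r hr
        have hr : 1 < r := hr
        rw [Real.norm_of_nonneg (hp0 r)]
        nlinarith [hp0 r]
    have hwp : IntegrableOn (fun r => r * (r - l) * p r) (Set.Ioi 0) := by
      refine (hint2.sub (hint1.const_mul l)).congr (Eventually.of_forall fun r => ?_)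
      simp only [Pi.sub_apply]; ring
    have hGp : IntegrableOn (fun r => (1/(1-Real.exp (-ε)))*((r-g)*(r-g1)) * p r) (Set.Ioi 0) := by
      refine (((hint2.sub (hint1.const_mul (g + g1))).add (hint0.const_mul (g * g1))).const_mul
        (1/(1-Real.exp (-ε)))).congr (Eventually.of_forall fun r => ?_)
      simp only [Pi.sub_apply, Pi.add_apply]; ring
    have key := ray_ineq (G := fun v => (1/(1-Real.exp (-ε)))*((v-g)*(v-g1))) (p := p)
      (Real.exp_pos (-ε)) hg1 hg1g hg hgl (by fun_prop) hrec
      (fun v _ h2 => mul_nonneg hA.le (mul_nonneg_of_nonpos_of_nonpos (by linarith) (by linarith)))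
      (fun v h => mul_nonneg hA.le (mul_nonneg (by linarith) (by linarith)))
      (fun v h1 h2 => mul_nonpos_of_nonneg_of_nonpos hA.le
        (mul_nonpos_of_nonpos_of_nonneg (by linarith) (by linarith)))
      hF hp0 hpC hpdp hGp hwp
    have e1 : ∫ r in Set.Ioi (0:ℝ), r * (r - l) * p r =
        (∫ r in Set.Ioi (0:ℝ), r * (r * p r)) - l * ∫ r in Set.Ioi (0:ℝ), r * p r := by
      rw [← integral_const_mul, ← integral_sub hint2 (hint1.const_mul l)]
      congr 1; ext r; ring
    have e2 : ∫ r in Set.Ioi (0:ℝ), r * p r = 1 := by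
      rw [integral_eq_lintegral_of_nonneg_ae hnn1 hint1.1, hI1]; simp
    rw [e1, e2] at key
    refine le_trans ?_ hI2
    rw [← ofReal_integral_eq_lintegral_ofReal hint2' hnn2, integral_const_mul]
    apply ENNReal.ofReal_le_ofReal
    gcongr
    linarith
  apply ENNReal.le_of_forall_pos_le_add
  intro δ hδ _
  have := main (δ / 2) (by positivity)
  convert this using 2
  rw [mul_div_cancel₀ _ two_ne_zero]
  simp

lemma stair_eq {ε Δ γ : ℝ} (hΔ : 0 < Δ) (x : ℝ × ℝ) :
    stair ε Δ γ x = anorm ε Δ γ * s1 ε γ (l1 x / Δ) := by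
  unfold stair s1
  have : (l1 x / Δ < (⌊l1 x / Δ⌋ : ℝ) + γ) ↔ l1 x < ((⌊l1 x / Δ⌋ : ℝ) + γ) * Δ := div_lt_iff₀ hΔ
  simp only [this]
  split_ifs <;> rfl

lemma anorm_eq {ε Δ γ : ℝ} (hε : 0 < ε) : anorm ε Δ γ = 1 / (4 * Δ^2 * M1 (Real.exp (-ε)) γ) := by
  have hb1 : Real.exp (-ε) < 1 := by rw [Real.exp_lt_one_iff]; linarith
  have h : M1 (Real.exp (-ε)) γ = (γ^2 + 2*Real.exp (-ε)/(1-Real.exp (-ε))*γ +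
      (Real.exp (-ε)+Real.exp (-ε)^2)/(1-Real.exp (-ε))^2)/2 := by
    have : 1 - Real.exp (-ε) ≠ 0 := by linarith
    unfold M1; field_simp; ring
  rw [h]; unfold anorm; congr 1; ring

lemma stair_lint {ε Δ γ : ℝ} (hε : 0 < ε) (hΔ : 0 < Δ) (hγ0 : 0 ≤ γ) (n : ℕ) :
    ∫⁻ x, ENNReal.ofReal (l1 x ^ n * stair ε Δ γ x) =
      ENNReal.ofReal (Δ^n / M1 (Real.exp (-ε)) γ * ∫ r in Set.Ioi (0:ℝ), r^(n+1) * s1 ε γ r) := by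
  have hb1 : Real.exp (-ε) < 1 := by rw [Real.exp_lt_one_iff]; linarith
  have hM := M1_pos (Real.exp_pos (-ε)) hb1 hγ0
  have hs := s1_meas ε γ
  have h := polar_l1 hΔ (f := fun _ => 1) measurable_const
    (h := fun r => ENNReal.ofReal ((Δ * r)^n * (anorm ε Δ γ * s1 ε γ r))) (by fun_prop)
  have e1 : ∀ x, ((Δ * (l1 x / Δ))^n * (anorm ε Δ γ * s1 ε γ (l1 x / Δ))) =
      l1 x ^ n * stair ε Δ γ x := by
    intro x; rw [stair_eq hΔ, mul_div_cancel₀ _ hΔ.ne']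
  simp only [e1, mul_one, Prad_const, Prad_one hΔ] at h
  rw [h, ← integral_const_mul, ofReal_integral_eq_lintegral_ofReal ((s1_int hε (n+1)).const_mul _)]
  · apply setLIntegral_congr_fun measurableSet_Ioi
    intro r hr
    have hr : 0 < r := hr
    have hsp := s1_pos ε γ r
    have ha : 0 ≤ anorm ε Δ γ := by rw [anorm_eq hε]; positivity
    simp only
    rw [← ENNReal.ofReal_mul (by positivity), ← ENNReal.ofReal_mul (by positivity), anorm_eq hε]
    congr 1
    field_simp
    rw [mul_pow, pow_succ]; ring
  · filter_upwards [ae_restrict_mem measurableSet_Ioi] with r hr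
    have hr : 0 < r := hr
    have hsp := s1_pos ε γ r
    simp only [Pi.zero_apply]
    positivity

lemma l1_add_le (x y : ℝ × ℝ) : l1 (x + y) ≤ l1 x + l1 y := by
  unfold l1
  have h1 := abs_add_le x.1 y.1
  have h2 := abs_add_le x.2 y.2
  simp only [Prod.fst_add, Prod.snd_add]
  linarith

lemma stair_meas {ε Δ γ : ℝ} (hΔ : 0 < Δ) : Measurable (stair ε Δ γ) := by
  have hs := s1_meas ε γ
  have hl := l1_meas
  have : stair ε Δ γ = fun x => anorm ε Δ γ * s1 ε γ (l1 x / Δ) := funext (stair_eq hΔ)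
  rw [this]; fun_prop

lemma upper_bound {ε Δ γ : ℝ} (hε : 0 < ε) (hΔ : 0 < Δ) (hγ0 : 0 ≤ γ) (hγ1 : γ ≤ 1) :
    ∃ μ : Measure (ℝ × ℝ), (IsProbabilityMeasure μ ∧ DPC ε Δ μ) ∧
      cost μ = ∫⁻ x, ENNReal.ofReal (l1 x * stair ε Δ γ x) := by
  have hb1 : Real.exp (-ε) < 1 := by rw [Real.exp_lt_one_iff]; linarith
  have hM := M1_pos (Real.exp_pos (-ε)) hb1 hγ0
  have ha : 0 ≤ anorm ε Δ γ := by rw [anorm_eq hε]; positivity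
  have hm : Measurable (fun x => ENNReal.ofReal (stair ε Δ γ x)) := (stair_meas hΔ).ennreal_ofReal
  have hl := l1_meas
  refine ⟨volume.withDensity (fun x => ENNReal.ofReal (stair ε Δ γ x)), ⟨⟨?_⟩, ?_⟩, ?_⟩
  · rw [withDensity_apply _ MeasurableSet.univ, setLIntegral_univ]
    have h := stair_lint (γ := γ) hε hΔ hγ0 0
    simp only [pow_zero, one_mul, zero_add, pow_one] at h
    rw [h, s1_M hε hγ0 hγ1, one_div, inv_mul_cancel₀ hM.ne', ENNReal.ofReal_one]
  · intro S hS t ht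
    have hS' : MeasurableSet ((· + t) '' S) := by
      rw [Set.image_add_right]; exact measurable_add_const (-t) hS
    rw [withDensity_apply _ hS, withDensity_apply _ hS', ← lintegral_const_mul _ hm]
    have h := (measurePreserving_add_right (volume : Measure (ℝ × ℝ)) t).setLIntegral_comp_emb
      (measurableEmbedding_addRight t)
      (fun x => ENNReal.ofReal (Real.exp ε) * ENNReal.ofReal (stair ε Δ γ x)) S
    rw [← h]
    apply lintegral_mono
    intro x
    simp only
    rw [← ENNReal.ofReal_mul (Real.exp_pos _).le]
    apply ENNReal.ofReal_le_ofReal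
    rw [stair_eq hΔ, stair_eq hΔ]
    have h1 : l1 (x + t) / Δ ≤ l1 x / Δ + 1 := by
      rw [div_le_iff₀ hΔ, add_mul, div_mul_cancel₀ _ hΔ.ne', one_mul]
      exact (l1_add_le x t).trans (by linarith)
    have h2 := s1_anti (γ := γ) hε h1
    rw [s1_add_one] at h2
    have h3 : s1 ε γ (l1 x / Δ) ≤ Real.exp ε * s1 ε γ (l1 (x + t) / Δ) := by
      calc s1 ε γ (l1 x / Δ) = Real.exp ε * (Real.exp (-ε) * s1 ε γ (l1 x / Δ)) := by
            rw [← mul_assoc, ← Real.exp_add]; simp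
        _ ≤ _ := by gcongr
    calc _ ≤ anorm ε Δ γ * (Real.exp ε * s1 ε γ (l1 (x + t) / Δ)) := by gcongr
      _ = _ := by ring
  · unfold cost
    rw [lintegral_withDensity_eq_lintegral_mul _ hm (by fun_prop)]
    apply lintegral_congr
    intro x
    rw [Pi.mul_apply, ← ENNReal.ofReal_mul' (l1_nonneg x), mul_comm]

/-- Theorem 1: for d = 2 and the ℓ¹ cost, the infimum of the expected cost over all
ε-differentially-private noise distributions equals the infimum over γ ∈ [0,1] of the
expected cost of the staircase distribution. -/
theorem staircase_optimal (ε Δ : ℝ) (hε : 0 < ε) (hΔ : 0 < Δ) :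
    (⨅ (μ : Measure (ℝ × ℝ)) (_ : IsProbabilityMeasure μ ∧ DPC ε Δ μ), cost μ) =
    ⨅ (γ : ℝ) (_ : γ ∈ Set.Icc (0 : ℝ) 1),
      ∫⁻ x, ENNReal.ofReal (l1 x * stair ε Δ γ x) := by
  have hb1 : Real.exp (-ε) < 1 := by rw [Real.exp_lt_one_iff]; linarith
  apply le_antisymm
  · refine le_iInf₂ fun γ hγ => ?_
    obtain ⟨μ, hμ, hc⟩ := upper_bound hε hΔ hγ.1 hγ.2
    rw [← hc]
    exact iInf₂_le μ hμ
  · refine le_iInf₂ fun μ hμ => ?_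
    have := hμ.1
    obtain ⟨g, g1, l, hg1, hg1g, hg, hgl, hrec, hN, hG⟩ := exists_opt (Real.exp_pos (-ε)) hb1
    have hg0 : 0 ≤ g := hg1.le.trans hg1g
    have hM := M1_pos (Real.exp_pos (-ε)) hb1 hg0
    refine (iInf₂_le g ⟨hg0, hg.le⟩).trans ?_
    have h := stair_lint (γ := g) hε hΔ hg0 1
    simp only [pow_one] at h
    rw [h, s1_N hε hg0 hg.le, hN]
    have e : Δ / M1 (Real.exp (-ε)) g * (l * M1 (Real.exp (-ε)) g) = Δ * l := by field_simp
    rw [e]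
    refine lower_bound hε hΔ hg1 hg1g hg hgl hrec ?_ μ hμ.2
    have hG' : ∀ v, (1/(1-Real.exp (-ε)))*((v-g)*(v-g1)) = (1/(1-Real.exp (-ε)))*v^2 +
        (2*(Real.exp (-ε)/(1-Real.exp (-ε))^2) - l * (1/(1-Real.exp (-ε)))) * v +
        (Real.exp (-ε)*(1+Real.exp (-ε))/(1-Real.exp (-ε))^3
          - l * (Real.exp (-ε)/(1-Real.exp (-ε))^2)) := by
      intro v; rw [hG v]; ring
    rw [funext hG', quad_integral, quad_integral]
    have hz : N1 (Real.exp (-ε)) g - l * M1 (Real.exp (-ε)) g = 0 := by linarith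
    refine le_of_eq (hz.symm.trans ?_)
    generalize Real.exp (-ε) = b
    unfold N1 M1
    ring
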